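/- Let k be a field and X a type; in F := FreeLieAlgebra k (X ⊕ X), write x̄ := ι(Sum.inl x) and ẋ := ι(Sum.inr x). For each pair (x, l) ∈ X × List X define the left-normed element w(x, l) := List.foldl (fun u y => ⁅u, ȳ⁆) ẋ l, i.e. the iterated bracket ⁅…⁅⁅ẋ, x̄₂⁆, x̄₃⁆, …, x̄ₙ⁆. Then the family (w(x, l))_{(x,l) ∈ X × List X} is linearly independent over k. -/

import Mathlib

/-!
Let the free Lie algebra act on `R × M`, where `M` is free on the pairs `(x, l)`, in such a way that
`ẋ` sends the vacuum `(1, 0)` to `(x, [])` and kills `M`, while `ȳ` kills the vacuum and sends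
`(x, l)` to `-(x, l ++ [y])`. As `ȳ` kills the vacuum, only one term of each commutator survives
there, so the left-normed word of `(x, l)` sends the vacuum to the basis vector `(x, l)`.
-/

section VacuumRepresentation

attribute [local instance] LieRing.ofAssociativeRing

variable {R : Type*} [CommRing R] {X Y : Type*}

theorem foldl_lie_apply_of_forall_apply_eq_zero {L M : Type*} [LieRing L] [LieAlgebra R L]
    [AddCommGroup M] [Module R M] (φ : L →ₗ⁅R⁆ Module.End R M) (b : Y → L) {m : M}
    (hm : ∀ y, φ (b y) m = 0) (a : L) (l : List Y) :
    φ (l.foldl (fun u y => ⁅u, b y⁆) a) m = l.foldl (fun n y => -φ (b y) n) (φ a m) := by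
  refine (List.foldl_hom (fun u => φ u m) fun u y => ?_).symm
  calc -φ (b y) (φ u m) = φ u (φ (b y) m) - φ (b y) (φ u m) := by rw [hm, map_zero, zero_sub]
    _ = φ ⁅u, b y⁆ m := by
      rw [LieHom.map_lie, LieRing.of_associative_ring_bracket, LinearMap.sub_apply,
        Module.End.mul_apply, Module.End.mul_apply]

variable (R X Y) in
/-- The vacuum representation of the free Lie algebra, given on generators, that separates the
left-normed words; `(1, 0)` is the vacuum. The sign in the action of the plain generators cancels
the one in the surviving term of the commutator. -/
noncomputable def wordAction : Y ⊕ X → Module.End R (R × (X × List Y →₀ R))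
  | Sum.inl y => -(LinearMap.inr R R _ ∘ₗ Finsupp.lmapDomain R R (fun p => (p.1, p.2 ++ [y])) ∘ₗ
      LinearMap.snd R R _)
  | Sum.inr x => LinearMap.inr R R _ ∘ₗ Finsupp.lsingle (x, []) ∘ₗ LinearMap.fst R R _

theorem wordAction_inl_vacuum (y : Y) : wordAction R X Y (Sum.inl y) (1, 0) = 0 := by
  simp [wordAction]

theorem wordAction_inl_single (y : Y) (x : X) (l : List Y) :
    wordAction R X Y (Sum.inl y) (0, Finsupp.single (x, l) 1) =
      -(0, Finsupp.single (x, l ++ [y]) 1) := by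
  simp [wordAction]

theorem wordAction_inr_vacuum (x : X) :
    wordAction R X Y (Sum.inr x) (1, 0) = (0, Finsupp.single (x, []) 1) := by
  simp [wordAction]

theorem foldl_neg_wordAction_inl (x : X) (l : List Y) :
    l.foldl (fun n y => -wordAction R X Y (Sum.inl y) n) (0, Finsupp.single (x, []) 1) =
      (0, Finsupp.single (x, l) 1) := by
  induction l using List.reverseRecOn with
  | nil => rfl
  | append_singleton l y ih => rw [List.foldl_concat, ih, wordAction_inl_single, neg_neg]

theorem lift_wordAction_foldl_lie_vacuum (x : X) (l : List Y) :
    FreeLieAlgebra.lift R (wordAction R X Y)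
        (l.foldl (fun u y => ⁅u, FreeLieAlgebra.of R (Sum.inl y)⁆)
          (FreeLieAlgebra.of R (Sum.inr x))) (1, 0) =
      (0, Finsupp.single (x, l) 1) := by
  rw [foldl_lie_apply_of_forall_apply_eq_zero _ _ fun y => by
    rw [FreeLieAlgebra.lift_of_apply, wordAction_inl_vacuum]]
  simp only [FreeLieAlgebra.lift_of_apply, wordAction_inr_vacuum, foldl_neg_wordAction_inl]

theorem left_normed_words_linearIndependent_general (R : Type*) [CommRing R] (X Y : Type*) :
    LinearIndependent R fun p : X × List Y =>
      p.2.foldl (fun (u : FreeLieAlgebra R (Y ⊕ X)) y => ⁅u, FreeLieAlgebra.of R (Sum.inl y)⁆)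
        (FreeLieAlgebra.of R (Sum.inr p.1)) := by
  let evalVacuum : FreeLieAlgebra R (Y ⊕ X) →ₗ[R] X × List Y →₀ R :=
    LinearMap.snd R R _ ∘ₗ LinearMap.applyₗ (1, 0) ∘ₗ
      (FreeLieAlgebra.lift R (wordAction R X Y)).toLinearMap
  refine LinearIndependent.of_comp evalVacuum ?_
  convert Finsupp.linearIndependent_single_one R (X × List Y) using 1
  funext p
  exact congrArg Prod.snd (lift_wordAction_foldl_lie_vacuum p.1 p.2)

end VacuumRepresentation

/-- In `FreeLieAlgebra k (X ⊕ X)`, the left-normed bracket words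
`⁅…⁅⁅ẋ, x̄₂⁆, x̄₃⁆, …, x̄ₙ⁆` beginning with a dotted generator followed by plain generators are
linearly independent. -/
theorem left_normed_words_linearIndependent (k : Type*) [Field k] (X : Type*) :
    LinearIndependent k fun p : X × List X =>
      List.foldl (fun (u : FreeLieAlgebra k (X ⊕ X)) (y : X) => ⁅u, FreeLieAlgebra.of k (Sum.inl y)⁆)
        (FreeLieAlgebra.of k (Sum.inr p.1)) p.2 :=
  left_normed_words_linearIndependent_general k X X
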